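/- arXiv:2501.13267 — 2 statements merged into one kernel-verified Lean document; each statement's English description precedes it below -/
import Mathlib

section
/- Let (d;a) = (d_1; a_0,…,a_n) be an h-regular pair with exactly one degree, where h is a positive integer, n ≥ 1, and a_i ∤ h for every i = 0,…,n. Then δ(d;a) ≥ F(a_0,…,a_n) (the ordinary Frobenius number, not just the 1/h-Frobenius number). -/
/-!
Since there is only one degree `d 0` and no weight divides `h`, regularity says exactly that every
weight divides `d 0` and that the gcd of any two weights divides `h`. Hence the lcm `L` of the
weights is at most `d 0`, and it suffices to show `F(a) ≤ L - ∑ a i` (`repAbove_lcm`).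

Adjoining one weight `b` to weights with gcd `g` raises the upper bound for `F + ∑ a i` by
`b * (g / gcd g b)` (`RepAbove.insert`, Brauer's argument). For two weights this gives precisely
their lcm. From then on, with `l` the lcm of at least two weights, both `g` and `m = gcd l b`
divide `h`, hence so does `lcm g m = m * (g / gcd g b)`. As neither `b` nor any weight dividing
`l` divides `h`, the divisors `m` of `b` and `lcm g m` of `l` are proper, so both cofactors
`b / m` and `l / lcm g m` are at least `2`, and `s + t ≤ s * t` for `s, t ≥ 2` yields
`l + b * (g / gcd g b) ≤ lcm l b` (`add_le_lcm`).
-/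

open Finset

/-- The amplitude `δ` of the (sub)pair given by the degrees `d` indexed by `D`
and the weights `a` indexed by `A`. -/
def deltaOn {ι κ : Type*} (D : Finset ι) (d : ι → ℕ) (A : Finset κ) (a : κ → ℕ) : ℤ :=
  (∑ j ∈ D, (d j : ℤ)) - ∑ i ∈ A, (a i : ℤ)

/-- The amplitude of a full pair `(d;a)`. -/
def deltaPair {ι κ : Type*} [Fintype ι] [Fintype κ] (d : ι → ℕ) (a : κ → ℕ) : ℤ :=
  deltaOn univ d univ a

/-- `h`-regularity of the (sub)pair given by the degrees `d` indexed by `D` and the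
weights `a` indexed by `A`: for every nonempty subset `I ⊆ A` of the weight indices with
`a_I := gcd_{i ∈ I} a i > 1`, either there are `|I|` pairwise distinct degree indices
`p ∈ D` with `a_I ∣ d p`, or `a_I ∣ h`. -/
def IsHRegularOn {ι κ : Type*} (h : ℕ) (D : Finset ι) (d : ι → ℕ)
    (A : Finset κ) (a : κ → ℕ) : Prop :=
  ∀ I : Finset κ, I ⊆ A → I.Nonempty → 1 < I.gcd a →
    (∃ P : Finset ι, P ⊆ D ∧ P.card = I.card ∧ ∀ j ∈ P, I.gcd a ∣ d j) ∨ I.gcd a ∣ h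

/-- `h`-regularity of a full pair `(d;a)`. -/
def IsHRegularPair {ι κ : Type*} [Fintype ι] [Fintype κ] (h : ℕ) (d : ι → ℕ)
    (a : κ → ℕ) : Prop :=
  IsHRegularOn h univ d univ a

/-- The generalised `1/h`-Frobenius number `F^h` of the weights indexed by `A`.
Letting `g` be the gcd of the weights, this is the largest integer `z` divisible by
`lcm g h` that is not a nonnegative integral combination of the weights; this agrees
with the renormalised definition `F^h = g * F^{h / gcd (g,h)} (a/g)`.  For `g = 1`
it is the largest multiple of `h` that is not a nonnegative integral combination of
the weights (so it equals `-h` if every positive multiple of `h` is such a combination),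
and `frobOn 1 A a` is the ordinary Frobenius number `F` (so `F = -1` if some weight
equals `1`). -/
noncomputable def frobOn {κ : Type*} (h : ℕ) (A : Finset κ) (a : κ → ℕ) : ℤ :=
  sSup {z : ℤ | ((Nat.lcm (A.gcd a) h : ℕ) : ℤ) ∣ z ∧
    ¬ ∃ x : κ → ℕ, ((∑ i ∈ A, x i * a i : ℕ) : ℤ) = z}

/-- The generalised `1/h`-Frobenius number `F^h` of a full tuple of weights. -/
noncomputable def frobNum {κ : Type*} [Fintype κ] (h : ℕ) (a : κ → ℕ) : ℤ :=
  frobOn h univ a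

/-- One half of the distributivity of gcd over lcm. -/
lemma gcd_lcm_dvd_lcm_gcd (x y b : ℕ) :
    Nat.gcd (Nat.lcm x y) b ∣ Nat.lcm (Nat.gcd x b) (Nat.gcd y b) := by
  rcases Nat.eq_zero_or_pos x with rfl | hx
  · simp [Nat.dvd_lcm_left]
  rcases Nat.eq_zero_or_pos y with rfl | hy
  · simp [Nat.dvd_lcm_right]
  rcases Nat.eq_zero_or_pos b with rfl | hb
  · simp
  have hxb : Nat.gcd x b ≠ 0 := (Nat.gcd_pos_of_pos_left _ hx).ne'
  have hyb : Nat.gcd y b ≠ 0 := (Nat.gcd_pos_of_pos_left _ hy).ne'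
  have hl : Nat.lcm x y ≠ 0 := Nat.lcm_ne_zero hx.ne' hy.ne'
  rw [← Nat.factorization_le_iff_dvd (Nat.gcd_ne_zero_left hl) (Nat.lcm_ne_zero hxb hyb),
    Nat.factorization_gcd hl hb.ne', Nat.factorization_lcm hx.ne' hy.ne',
    Nat.factorization_lcm hxb hyb, Nat.factorization_gcd hx.ne' hb.ne',
    Nat.factorization_gcd hy.ne' hb.ne']
  intro p
  simp only [Finsupp.inf_apply, Finsupp.sup_apply]
  exact (inf_sup_right _ _ _).le

/-- The gcd of `b` with an lcm divides `h` as soon as its gcd with every single entry does: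
this is distributivity of gcd over lcm, applied to a finite family. -/
lemma gcd_finset_lcm_dvd {κ : Type*} (h b : ℕ) (a : κ → ℕ) (s : Finset κ)
    (H : ∀ i ∈ s, Nat.gcd (a i) b ∣ h) : Nat.gcd (s.lcm a) b ∣ h := by
  classical
  induction s using Finset.induction_on with
  | empty => simp
  | insert i s hi ih =>
    rw [Finset.lcm_insert]
    have h1 := H i (mem_insert_self _ _)
    have h2 := ih fun j hj => H j (mem_insert_of_mem hj)
    exact (gcd_lcm_dvd_lcm_gcd (a i) (s.lcm a) b).trans (Nat.lcm_dvd h1 h2)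

/-- The growth of the lcm when a weight `b` is adjoined to weights with gcd `g` and lcm `l`:
it is at least the increase `b * (g / gcd g b)` of the bound in `RepAbove.insert`. -/
lemma add_le_lcm {h g l b : ℕ} (hl : 0 < l) (hb : 0 < b) (hgl : g ∣ l) (hgh : g ∣ h)
    (hmh : Nat.gcd l b ∣ h) (hlh : ¬ l ∣ h) (hbh : ¬ b ∣ h) :
    l + b * (g / Nat.gcd g b) ≤ Nat.lcm l b := by
  have hg : 0 < g := Nat.pos_of_dvd_of_pos hgl hl
  have hg' : 0 < Nat.gcd g b := Nat.gcd_pos_of_pos_left _ hg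
  have hm : 0 < Nat.gcd l b := Nat.gcd_pos_of_pos_left _ hl
  have hgm : Nat.gcd g (Nat.gcd l b) = Nat.gcd g b := by
    rw [← Nat.gcd_assoc, Nat.gcd_eq_left hgl]
  obtain ⟨t, ht⟩ := Nat.gcd_dvd_left g b
  have htdiv : g / Nat.gcd g b = t := Nat.div_eq_of_eq_mul_right hg' ht
  -- `lcm g (gcd l b) = gcd l b * t` divides both `h` and `l`, so it is a proper divisor of `l`.
  have hw : Nat.lcm g (Nat.gcd l b) = Nat.gcd l b * t := by
    have := Nat.gcd_mul_lcm g (Nat.gcd l b)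
    rw [hgm] at this
    apply Nat.eq_of_mul_eq_mul_left hg'
    rw [this]
    nth_rewrite 1 [ht]
    ring
  have hwh : Nat.gcd l b * t ∣ h := hw ▸ Nat.lcm_dvd hgh hmh
  have hwl : Nat.gcd l b * t ∣ l := hw ▸ Nat.lcm_dvd hgl (Nat.gcd_dvd_left l b)
  obtain ⟨b', hb'⟩ := Nat.gcd_dvd_right l b
  have hlcm : Nat.lcm l b = l * b' := by
    apply Nat.eq_of_mul_eq_mul_left hm
    rw [Nat.gcd_mul_lcm]
    nth_rewrite 1 [hb']
    ring
  rw [htdiv, hlcm]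
  generalize Nat.gcd l b = m at *
  obtain ⟨s, rfl⟩ := hwl
  have hs : 2 ≤ s := by
    by_contra! hlt
    interval_cases s
    · simp at hl
    · exact hlh (by simpa using hwh)
  have hb2 : 2 ≤ b' := by
    by_contra! hlt
    interval_cases b'
    · omega
    · exact hbh (by rw [hb']; simpa using hmh)
  have e : s + b' ≤ s * b' := by nlinarith
  calc m * t * s + b * t = m * t * (s + b') := by rw [hb']; ring
    _ ≤ m * t * (s * b') := Nat.mul_le_mul_left _ e
    _ = m * t * s * b' := by ring

/-- Every multiple of the gcd of the weights indexed by `A` that exceeds `B - ∑ a i` is a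
nonnegative integral combination of these weights; that is, `F ≤ B - ∑ a i`. -/
def RepAbove {κ : Type*} (a : κ → ℕ) (A : Finset κ) (B : ℕ) : Prop :=
  ∀ z : ℤ, ((A.gcd a : ℕ) : ℤ) ∣ z → (B : ℤ) - ∑ i ∈ A, (a i : ℤ) < z →
    ∃ x : κ → ℕ, ((∑ i ∈ A, x i * a i : ℕ) : ℤ) = z

lemma RepAbove.singleton {κ : Type*} {a : κ → ℕ} (i : κ) (hi : 0 < a i) :
    RepAbove a {i} 0 := by
  rintro z hz hlt
  simp only [Finset.gcd_singleton, normalize_eq, Finset.sum_singleton] at hz hlt ⊢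
  obtain ⟨k, rfl⟩ := hz
  have hk : 0 ≤ k := by
    by_contra! hk
    have : (0 : ℤ) < a i := by exact_mod_cast hi
    nlinarith
  lift k to ℕ using hk
  exact ⟨fun _ => k, by push_cast; ring⟩

/-- Brauer's recursive bound: with `g` the gcd of the weights on `A`, adjoining `b = a j` raises
the bound by `b * (g / gcd g b)`. One subtracts a multiple `x * b` with `0 ≤ x < g / gcd g b`
to reach a multiple of `g`. -/
lemma RepAbove.insert {κ : Type*} [DecidableEq κ] {a : κ → ℕ} {A : Finset κ} {B : ℕ} {j : κ}
    (hA : RepAbove a A B) (hj : j ∉ A) (hg : 0 < A.gcd a) :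
    RepAbove a (insert j A) (B + a j * (A.gcd a / Nat.gcd (A.gcd a) (a j))) := by
  rintro z hz hlt
  rw [Finset.gcd_insert] at hz
  rw [Finset.sum_insert hj] at hlt
  generalize hgdef : A.gcd a = g at *
  have hz' : ((Nat.gcd g (a j) : ℕ) : ℤ) ∣ z := by rw [Nat.gcd_comm]; exact hz
  have hg' : 0 < Nat.gcd g (a j) := Nat.gcd_pos_of_pos_left _ hg
  obtain ⟨t, ht⟩ := Nat.gcd_dvd_left g (a j)
  have htdiv : g / Nat.gcd g (a j) = t := Nat.div_eq_of_eq_mul_right hg' ht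
  rw [htdiv] at hlt
  have htpos : (0 : ℤ) < t := by
    rcases Nat.eq_zero_or_pos t with h0 | h0
    · subst h0; omega
    · exact_mod_cast h0
  obtain ⟨c, hc⟩ := hz'
  have hbez : ((Nat.gcd g (a j) : ℕ) : ℤ) = g * Nat.gcdA g (a j) + a j * Nat.gcdB g (a j) :=
    Nat.gcd_eq_gcd_ab g (a j)
  obtain ⟨b', hb'⟩ := Nat.gcd_dvd_right g (a j)
  -- Bézout solves `z ≡ y * a j` modulo `g`; only `y` modulo `t = g / gcd g (a j)` matters.
  set y : ℤ := c * Nat.gcdB g (a j) with hy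
  have hxt : y % t < t := Int.emod_lt_of_pos _ htpos
  have hx0 : 0 ≤ y % t := Int.emod_nonneg _ htpos.ne'
  have hyd : t * (y / t) + y % t = y := Int.mul_ediv_add_emod y t
  have haj : (a j : ℤ) = Nat.gcd g (a j) * b' := by exact_mod_cast hb'
  have hgt : (g : ℤ) = Nat.gcd g (a j) * t := by exact_mod_cast ht
  obtain ⟨x, hx⟩ := Int.eq_ofNat_of_zero_le hx0
  rw [hx] at hxt hyd
  have hdvd : ((g : ℕ) : ℤ) ∣ z - x * a j := by
    refine ⟨c * Nat.gcdA g (a j) + y / t * b', ?_⟩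
    have e1 : z = g * (c * Nat.gcdA g (a j)) + a j * y := by
      rw [hc, hy]; nth_rewrite 1 [hbez]; ring
    have e2 : (a j : ℤ) * t = g * b' := by
      rw [hgt]; nth_rewrite 1 [haj]; ring
    rw [e1]
    linear_combination (-(a j : ℤ)) * hyd + (y / t) * e2
  have hlt' : (B : ℤ) - ∑ i ∈ A, (a i : ℤ) < z - x * a j := by
    have : (x : ℤ) * a j ≤ (t - 1) * a j :=
      mul_le_mul_of_nonneg_right (by omega) (by positivity)
    push_cast at hlt
    linarith
  obtain ⟨w, hw⟩ := hA _ (by rw [hgdef]; exact hdvd) hlt'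
  refine ⟨Function.update w j x, ?_⟩
  rw [Finset.sum_insert hj, Function.update_self]
  have : ∑ i ∈ A, Function.update w j x i * a i = ∑ i ∈ A, w i * a i :=
    Finset.sum_congr rfl fun i hi => by
      rw [Function.update_of_ne (ne_of_mem_of_not_mem hi hj)]
  rw [this]
  push_cast at hw ⊢
  linarith

/-- The sharp form of the bound, with the degree replaced by its smallest possible value, the
lcm of the weights. It only holds for at least two weights: for a single weight the best bound
is `0`, which starts the induction. -/
lemma repAbove_lcm {κ : Type*} {h : ℕ} {a : κ → ℕ} (ha : ∀ i, 0 < a i)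
    (hnd : ∀ i, ¬ a i ∣ h) (hpair : ∀ i j, i ≠ j → Nat.gcd (a i) (a j) ∣ h) (A : Finset κ)
    (hne : A.Nonempty) (hcard : 2 ≤ A.card) : RepAbove a A (A.lcm a) := by
  classical
  induction hne using Finset.Nonempty.cons_induction with
  | singleton i => simp at hcard
  | cons j s hj hs ih =>
    rw [Finset.cons_eq_insert]
    obtain ⟨i, hi⟩ := hs
    have hgi : s.gcd a ∣ a i := Finset.gcd_dvd hi
    have hil : a i ∣ s.lcm a := Finset.dvd_lcm hi
    have hg : 0 < s.gcd a := Nat.pos_of_dvd_of_pos hgi (ha i)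
    have hl : 0 < s.lcm a :=
      Nat.pos_of_ne_zero fun h0 => by
        obtain ⟨k, -, hk⟩ := Finset.lcm_eq_zero_iff.1 h0
        exact (ha k).ne' hk
    have hlcm : (insert j s).lcm a = Nat.lcm (s.lcm a) (a j) := by
      rw [Finset.lcm_insert, Nat.lcm_comm]; rfl
    rw [hlcm]
    rcases Nat.lt_or_ge s.card 2 with h1 | h2
    · obtain rfl : s = {i} := by
        obtain ⟨k, rfl⟩ := Finset.card_eq_one.1
          (le_antisymm (by omega) (Finset.card_pos.2 ⟨i, hi⟩))
        rw [Finset.mem_singleton.1 hi]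
      have := (RepAbove.singleton i (ha i)).insert hj hg
      simp only [Finset.gcd_singleton, Finset.lcm_singleton, normalize_eq] at this ⊢
      convert this using 1
      rw [zero_add, Nat.lcm_comm, Nat.lcm, Nat.gcd_comm,
        Nat.mul_div_assoc _ (Nat.gcd_dvd_left _ _)]
    · obtain ⟨k, hk, hki⟩ := Finset.exists_mem_ne (s := s) (by omega) i
      have hgh : s.gcd a ∣ h :=
        (Nat.dvd_gcd hgi (Finset.gcd_dvd hk)).trans (hpair i k hki.symm)
      have hmh : Nat.gcd (s.lcm a) (a j) ∣ h := gcd_finset_lcm_dvd h (a j) a s fun k hk =>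
        hpair k j (ne_of_mem_of_not_mem hk hj)
      have hle := add_le_lcm hl (ha j) (hgi.trans hil) hgh hmh
        (fun hd => hnd i (hil.trans hd)) (hnd j)
      intro z hz hlt
      refine (ih h2).insert hj hg z hz (lt_of_le_of_lt ?_ hlt)
      gcongr

/-- **Theorem (codimension 1, ordinary Frobenius bound).**
If `(d;a) = (d₁; a₀,…,aₙ)` is an `h`-regular pair with exactly one degree, `n ≥ 1`, and
`aᵢ ∤ h` for all `i`, then `δ(d;a) ≥ F(a₀,…,aₙ)` (the ordinary Frobenius number). -/
theorem codim_one_ordinary_frobenius_bound (h n : ℕ) (hh : 0 < h) (hn : 1 ≤ n)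
    (d : Fin 1 → ℕ) (a : Fin (n + 1) → ℕ)
    (hd : ∀ j, 0 < d j) (ha : ∀ i, 0 < a i)
    (hreg : IsHRegularPair h d a) (hnd : ∀ i, ¬ a i ∣ h) :
    deltaPair d a ≥ frobNum 1 a := by
  have hone : ∀ i, a i ≠ 1 := fun i hi => hnd i (hi ▸ one_dvd h)
  -- Each weight divides the degree, by regularity for singletons.
  have hdvd : ∀ i, a i ∣ d 0 := by
    intro i
    have hi := ha i
    have hi1 := hone i
    rcases hreg {i} (subset_univ _) (singleton_nonempty i) (by simp; omega) with
      ⟨P, -, hP, hPd⟩ | hdh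
    · obtain ⟨p, hp⟩ := Finset.card_pos.1 (by rw [hP]; simp : 0 < P.card)
      have := hPd p hp
      rw [Subsingleton.elim p 0] at this
      simpa using this
    · exact absurd (by simpa using hdh) (hnd i)
  -- There is only one degree, so regularity for pairs of weights puts their gcd inside `h`.
  have hpair : ∀ i j, i ≠ j → Nat.gcd (a i) (a j) ∣ h := by
    intro i j hij
    have hgcd : ({i, j} : Finset (Fin (n + 1))).gcd a = Nat.gcd (a i) (a j) := by
      rw [Finset.gcd_insert, Finset.gcd_singleton, normalize_eq]; rfl
    rcases Nat.lt_or_ge 1 (Nat.gcd (a i) (a j)) with hlt | hge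
    · rcases hreg {i, j} (subset_univ _) ⟨i, by simp⟩ (by rwa [hgcd]) with ⟨P, -, hP, -⟩ | hdh
      · have h1 := Finset.card_le_univ P
        rw [hP, Finset.card_pair hij, Fintype.card_fin] at h1
        omega
      · rwa [hgcd] at hdh
    · have := Nat.gcd_pos_of_pos_left (a j) (ha i)
      rw [show Nat.gcd (a i) (a j) = 1 by omega]
      exact one_dvd h
  have hrep := repAbove_lcm ha hnd hpair univ univ_nonempty (by simp; omega)
  have hle : univ.lcm a ≤ d 0 := Nat.le_of_dvd (hd 0) (Finset.lcm_dvd fun i _ => hdvd i)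
  have hg : 0 < univ.gcd a :=
    Nat.pos_of_dvd_of_pos (Finset.gcd_dvd (mem_univ (0 : Fin (n + 1)))) (ha 0)
  unfold frobNum frobOn
  -- `-gcd` is not representable, so the set is nonempty and its supremum is not a junk value.
  refine csSup_le ⟨-((univ.gcd a : ℕ) : ℤ), by simp, ?_⟩ ?_
  · rintro ⟨x, hx⟩
    have : (0 : ℤ) ≤ ((∑ i, x i * a i : ℕ) : ℤ) := Int.natCast_nonneg _
    omega
  · rintro z ⟨hz, hnot⟩
    by_contra! hlt
    refine hnot (hrep z (by simpa using hz) (lt_of_le_of_lt ?_ hlt))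
    simp only [deltaPair, deltaOn, Finset.univ_unique, Fin.default_eq_zero,
      Finset.sum_singleton]
    gcongr
end

section
/- Let (d;a) = (d_1,d_2; a_0,…,a_n) be an h-regular pair with exactly two degrees, where h is a positive integer, n ≥ 2, and a_i ∤ h for every i = 0,…,n. Then δ(d;a) ≥ F^h(a_0,…,a_n). -/
/-!
Write `h ∣ z`, `z > d₁ + d₂ - ∑ aᵢ`; the claim is that `z` is a non-negative combination of the
weights.  Call a gcd of two weights *good* if it divides `h`; a gcd that is not good divides both
degrees, and gcds of three weights are good.  The bounds on representability come from
Sylvester's theorem (`repr_two`) and Brauer's bound for three generators (`repr_three`).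

The basic operation drops a weight `aₙ` and pays for it by dividing a degree `d` by a prime `p`:
this frees at least `d / 2`.  It is available because `aₙ ∤ h` gives a prime power `p ^ k ∣ aₙ`
with `p ^ k ∤ h`, and such a prime power divides at most one other weight.

* One degree, all gcds good (`rep_one_degree`): dropping weights leads to two of them, where
  Sylvester's theorem applies.
* All weights divide `d₁` (`Reg1.rep`): three weights are treated directly.  For more weights, one
  drops weights, and one may also enlarge a weight by a factor of `gcd h d₁` as long as regularity
  persists, since this only strengthens the claim.  When neither is possible
  (`Reg1.rep_irreducible`), each prime `q` with `v_q(X) > v_q(d₂)`, where `X = gcd h d₁`, yields a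
  subfamily with good gcds, namely the weights divisible by `q ^ v_q(X)`.  In this subfamily the
  weights may be replaced by `lcm aᵢ X`, and the one-degree bound `d₁ - ∑ lcm aᵢ X` is at most
  `d₁ - ∑ aᵢ` (sum over all weights) for some `q`, by averaging over `q`.
* General case (`Reg2.rep`): with three weights, two divide the same degree and Sylvester's or
  Brauer's bound fits.  With more, if `d₁ ≤ d₂` and some `aₙ` divides `d₁`, then `aₙ` is at most
  half of either degree (or equals `d₁` and cancels), so that it can be dropped after dividing
  whichever degree permits it by a prime.
-/

open Finset

/-! ### Divisibility of natural numbers -/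

theorem primePow_dvd_lcm {p k a b : ℕ} (hp : p.Prime) (h : p ^ k ∣ Nat.lcm a b) :
    p ^ k ∣ a ∨ p ^ k ∣ b := by
  rcases Nat.eq_zero_or_pos a with rfl | ha
  · simp
  rcases Nat.eq_zero_or_pos b with rfl | hb
  · simp
  rw [hp.pow_dvd_iff_le_factorization (Nat.lcm_pos ha hb).ne',
    Nat.factorization_lcm ha.ne' hb.ne', Finsupp.sup_apply, le_sup_iff] at h
  rwa [hp.pow_dvd_iff_le_factorization ha.ne', hp.pow_dvd_iff_le_factorization hb.ne']

/-- Distributivity of the divisibility lattice, in the form in which it is used. -/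
theorem gcd_lcm_dvd (c a b : ℕ) :
    Nat.gcd c (Nat.lcm a b) ∣ Nat.lcm (Nat.gcd a c) (Nat.gcd b c) := by
  rw [Nat.dvd_iff_prime_pow_dvd_dvd]
  intro p k hp h
  have hc := h.trans (Nat.gcd_dvd_left _ _)
  rcases primePow_dvd_lcm hp (h.trans (Nat.gcd_dvd_right _ _)) with h' | h'
  · exact (Nat.dvd_gcd h' hc).trans (Nat.dvd_lcm_left _ _)
  · exact (Nat.dvd_gcd h' hc).trans (Nat.dvd_lcm_right _ _)

theorem exists_primePow {a h : ℕ} (hn : ¬ a ∣ h) :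
    ∃ p k : ℕ, p.Prime ∧ p ^ k ∣ a ∧ ¬ p ^ k ∣ h := by
  rw [Nat.dvd_iff_prime_pow_dvd_dvd] at hn
  push Not at hn
  exact hn

/-- If `m ∣ d` does not contain the prime power `p ^ k ∣ d`, then a factor `p` of `d` can be
spared. -/
theorem dvd_div_prime {p k m d : ℕ} (hp : p.Prime) (hm : m ∣ d) (hd : p ^ k ∣ d)
    (hk : ¬ p ^ k ∣ m) : m ∣ d / p := by
  obtain ⟨t, rfl⟩ := hm
  by_cases hpt : p ∣ t
  · obtain ⟨s, rfl⟩ := hpt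
    rw [mul_left_comm, Nat.mul_div_cancel_left _ hp.pos]
    exact dvd_mul_right _ _
  · exact absurd ((Nat.Coprime.pow_left k ((hp.coprime_iff_not_dvd).2 hpt)).dvd_of_dvd_mul_right hd)
      hk

theorem pos_exp {p k h : ℕ} (hk : ¬ p ^ k ∣ h) : k ≠ 0 := by
  rintro rfl
  simp at hk

/-- Dividing `d` by a prime frees at least half of `d`, which is enough to pay for any proper
divisor of some `e ≤ d`. -/
theorem div_prime_add_le {p b d e : ℕ} (hp : p.Prime) (he : 0 < e)
    (hbe : b ∣ e) (hne : b ≠ e) (hed : e ≤ d) : d / p + b ≤ d := by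
  obtain ⟨t, rfl⟩ := hbe
  have h1 : d / p ≤ d / 2 := Nat.div_le_div_left hp.two_le (by norm_num)
  have ht : 2 ≤ t := by
    rcases t with _ | _ | t
    · simp at he
    · simp at hne
    · omega
  have : b * 2 ≤ b * t := Nat.mul_le_mul_left _ ht
  omega

theorem div_prime_pos {p d : ℕ} (hp : p.Prime) (hd : 0 < d) (hpd : p ∣ d) : 0 < d / p :=
  Nat.div_pos (Nat.le_of_dvd hd hpd) hp.pos

/-- `a + b ≤ lcm a b + gcd a b`, with the `lcm` replaced by any positive common multiple. -/
theorem add_le_add_gcd {a b d : ℕ} (hd : 0 < d) (ha : a ∣ d) (hb : b ∣ d) :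
    a + b ≤ d + Nat.gcd a b := by
  have ha0 : 0 < a := Nat.pos_of_dvd_of_pos ha hd
  have hb0 : 0 < b := Nat.pos_of_dvd_of_pos hb hd
  have hl : Nat.lcm a b ≤ d := Nat.le_of_dvd hd (Nat.lcm_dvd ha hb)
  have hm := Nat.gcd_mul_lcm a b
  have hg : 0 < Nat.gcd a b := Nat.gcd_pos_of_pos_left _ ha0
  obtain ⟨x, hx⟩ := Nat.gcd_dvd_left a b
  obtain ⟨y, hy⟩ := Nat.gcd_dvd_right a b
  generalize Nat.gcd a b = g at *
  subst hx
  subst hy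
  have hx1 : 1 ≤ x := Nat.pos_of_mul_pos_left ha0
  have hy1 : 1 ≤ y := Nat.pos_of_mul_pos_left hb0
  have hl' : Nat.lcm (g * x) (g * y) = g * (x * y) :=
    Nat.eq_of_mul_eq_mul_left hg (by rw [hm]; ring)
  have hxy : x + y ≤ x * y + 1 := by nlinarith
  have := Nat.mul_le_mul_left g hxy
  rw [hl'] at hl
  nlinarith

/-! ### Representability by two and three generators -/

theorem exists_residue {m c : ℕ} (hm : 0 < m) {z : ℤ} (hz : ((Nat.gcd m c : ℕ) : ℤ) ∣ z) :
    ∃ u : ℕ, u * c + c ≤ Nat.lcm m c ∧ (m : ℤ) ∣ z - u * c := by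
  have hg : 0 < Nat.gcd m c := Nat.gcd_pos_of_pos_left _ hm
  obtain ⟨t, rfl⟩ := hz
  have hbez := Nat.gcd_eq_gcd_ab m c
  obtain ⟨m', hm'⟩ := Nat.gcd_dvd_left m c
  obtain ⟨c', hc'⟩ := Nat.gcd_dvd_right m c
  have hl := Nat.gcd_mul_lcm m c
  generalize Nat.gcdA m c = x at *
  generalize Nat.gcdB m c = y at *
  generalize Nat.lcm m c = l at *
  generalize Nat.gcd m c = g at *
  have hm0 : 0 < m' := Nat.pos_of_mul_pos_left (hm' ▸ hm)
  have hl' : l = m' * c := Nat.eq_of_mul_eq_mul_left hg (by rw [hl, hm']; ring)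
  have h0 : 0 ≤ (y * t) % (m' : ℤ) := Int.emod_nonneg _ (by exact_mod_cast hm0.ne')
  have h1 : (y * t) % (m' : ℤ) < m' := Int.emod_lt_of_pos _ (by exact_mod_cast hm0)
  have h2 := Int.emod_add_mul_ediv (y * t) (m' : ℤ)
  obtain ⟨u, hu⟩ := Int.eq_ofNat_of_zero_le h0
  rw [hu] at h1 h2
  refine ⟨u, ?_, ?_⟩
  · rw [hl']
    have : u + 1 ≤ m' := by exact_mod_cast h1
    nlinarith
  · refine ⟨x * t + (y * t / (m' : ℤ)) * c', ?_⟩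
    have e1 : (m : ℤ) = g * m' := by exact_mod_cast hm'
    have e2 : (c : ℤ) = g * c' := by exact_mod_cast hc'
    generalize y * t / (m' : ℤ) = q at *
    have e3 : (u : ℤ) = y * t - m' * q := by linarith
    rw [hbez, e3, e1, e2]
    ring

theorem repr_two {a b : ℕ} (hb : 0 < b) {z : ℤ}
    (hz : ((Nat.gcd a b : ℕ) : ℤ) ∣ z) (hlt : (Nat.lcm a b : ℤ) - a - b < z) :
    ∃ u v : ℕ, z = u * a + v * b := by
  rw [Nat.gcd_comm] at hz
  rw [Nat.lcm_comm] at hlt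
  obtain ⟨u, hu, k, hk⟩ := exists_residue hb hz
  have hu' : (u : ℤ) * a + a ≤ Nat.lcm b a := by exact_mod_cast hu
  have hb' : (0 : ℤ) < b := by exact_mod_cast hb
  have hk0 : 0 ≤ k := by
    by_contra hneg
    have : k ≤ -1 := by omega
    nlinarith
  lift k to ℕ using hk0
  exact ⟨u, k, by linarith⟩

/-- Brauer's bound for three generators. -/
theorem repr_three {a b c : ℕ} (hb : 0 < b) {z : ℤ}
    (hz : ((Nat.gcd (Nat.gcd a b) c : ℕ) : ℤ) ∣ z)
    (hlt : (Nat.lcm a b : ℤ) + Nat.lcm (Nat.gcd a b) c - a - b - c < z) :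
    ∃ u v w : ℕ, z = u * a + v * b + w * c := by
  obtain ⟨w, hw, hd⟩ := exists_residue (Nat.gcd_pos_of_pos_right a hb) hz
  have hw' : (w : ℤ) * c + c ≤ Nat.lcm (Nat.gcd a b) c := by exact_mod_cast hw
  obtain ⟨u, v, h⟩ := repr_two hb hd (by linarith)
  exact ⟨u, v, w, by linarith⟩

/-! ### Three weights dividing the same degree -/

theorem three_all_bad {h a b c d₁ d₂ : ℕ} (h₁ : 0 < d₁) (h₂ : 0 < d₂) (ha : a ∣ d₁) (hb : b ∣ d₁)
    (hc : c ∣ d₁) (hab : Nat.gcd a b ∣ d₂) (hac : Nat.gcd a c ∣ d₂) (hbc : Nat.gcd b c ∣ d₂)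
    (habc : Nat.gcd (Nat.gcd a b) c ∣ h) {z : ℤ} (hz : (h : ℤ) ∣ z)
    (hlt : (d₁ : ℤ) + d₂ - a - b - c < z) : ∃ u v w : ℕ, z = u * a + v * b + w * c := by
  refine repr_three (Nat.pos_of_dvd_of_pos hb h₁) ((Int.natCast_dvd_natCast.2 habc).trans hz) ?_
  have h3 := add_le_add_gcd h₁ (Nat.lcm_dvd ha hb)
    (Nat.lcm_dvd ((Nat.gcd_dvd_left a b).trans ha) hc)
  have h4 : Nat.gcd (Nat.lcm a b) (Nat.lcm (Nat.gcd a b) c) ∣ d₂ := by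
    refine (gcd_lcm_dvd _ _ _).trans (Nat.lcm_dvd ((Nat.gcd_dvd_left _ _).trans hab) ?_)
    refine (gcd_lcm_dvd _ _ _).trans (Nat.lcm_dvd hac hbc)
  have h5 := Nat.le_of_dvd h₂ h4
  omega

theorem three_two_bad {h a b c d₁ d₂ : ℕ} (h₁ : 0 < d₁) (h₂ : 0 < d₂) (ha : a ∣ d₁) (hb : b ∣ d₁)
    (hc : c ∣ d₁) (hab : Nat.gcd a b ∣ h) (hac : Nat.gcd a c ∣ d₂) (hbc : Nat.gcd b c ∣ d₂)
    {z : ℤ} (hz : (h : ℤ) ∣ z) (hlt : (d₁ : ℤ) + d₂ - a - b - c < z) :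
    ∃ u v : ℕ, z = u * a + v * b := by
  refine repr_two (Nat.pos_of_dvd_of_pos hb h₁) ((Int.natCast_dvd_natCast.2 hab).trans hz) ?_
  have h3 := add_le_add_gcd h₁ hc (Nat.lcm_dvd ha hb)
  have h5 := Nat.le_of_dvd h₂ ((gcd_lcm_dvd c a b).trans (Nat.lcm_dvd hac hbc))
  omega

/-- Since `gcd b c ∣ h ∣ z`, the weight `a` may be replaced by its multiple `lcm a (gcd b c)`
before Sylvester's bound is applied to it and `c`; this gain is what makes the bound fit. -/
theorem three_one_bad {h a b c d₁ d₂ : ℕ} (h₁ : 0 < d₁) (h₂ : 0 < d₂) (ha : a ∣ d₁) (hb : b ∣ d₁)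
    (hc : c ∣ d₁) (hab : Nat.gcd a b ∣ d₂) (hac : Nat.gcd a c ∣ h) (hbc : Nat.gcd b c ∣ h)
    {z : ℤ} (hz : (h : ℤ) ∣ z) (hlt : (d₁ : ℤ) + d₂ - a - b - c < z) :
    ∃ u v : ℕ, z = u * a + v * c := by
  have hc0 := Nat.pos_of_dvd_of_pos hc h₁
  have ha0 := Nat.pos_of_dvd_of_pos ha h₁
  have hb0 := Nat.pos_of_dvd_of_pos hb h₁
  obtain ⟨t, ht⟩ := Nat.dvd_lcm_left a (Nat.gcd b c)
  have hgood : Nat.gcd (Nat.lcm a (Nat.gcd b c)) c ∣ h := by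
    rw [Nat.gcd_comm]
    exact (gcd_lcm_dvd _ _ _).trans
      (Nat.lcm_dvd hac ((Nat.gcd_dvd_left _ _).trans hbc))
  obtain ⟨u, v, huv⟩ := repr_two (a := Nat.lcm a (Nat.gcd b c)) (b := c) (z := z) hc0
    ((Int.natCast_dvd_natCast.2 hgood).trans hz) (by
      have e1 : Nat.lcm (Nat.lcm a (Nat.gcd b c)) c = Nat.lcm a c :=
        Nat.dvd_antisymm (Nat.lcm_dvd (Nat.lcm_dvd (Nat.dvd_lcm_left _ _)
          ((Nat.gcd_dvd_right _ _).trans (Nat.dvd_lcm_right _ _))) (Nat.dvd_lcm_right _ _))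
          (Nat.lcm_dvd ((Nat.dvd_lcm_left _ _).trans (Nat.dvd_lcm_left _ _))
            (Nat.dvd_lcm_right _ _))
      rw [e1]
      have h3 := add_le_add_gcd h₁ hb (Nat.lcm_dvd ha hc)
      have hM : 0 < Nat.lcm (Nat.gcd a b) (Nat.gcd b c) :=
        Nat.lcm_pos (Nat.gcd_pos_of_pos_left _ ha0) (Nat.gcd_pos_of_pos_left _ hb0)
      have h4 : Nat.gcd b (Nat.lcm a c) ≤ Nat.lcm (Nat.gcd a b) (Nat.gcd b c) := by
        refine Nat.le_of_dvd hM ((gcd_lcm_dvd _ _ _).trans ?_)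
        rw [Nat.gcd_comm c b]
      have h5 := add_le_add_gcd (a := a) (b := Nat.lcm (Nat.gcd a b) (Nat.gcd b c))
        (Nat.lcm_pos ha0 (Nat.gcd_pos_of_pos_left c hb0))
        (Nat.dvd_lcm_left _ _)
        (Nat.lcm_dvd ((Nat.gcd_dvd_left a b).trans (Nat.dvd_lcm_left _ _)) (Nat.dvd_lcm_right _ _))
      have h6 : Nat.gcd a (Nat.lcm (Nat.gcd a b) (Nat.gcd b c)) ∣ Nat.gcd a b := by
        refine (gcd_lcm_dvd _ _ _).trans (Nat.lcm_dvd (Nat.gcd_dvd_left _ _) ?_)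
        exact Nat.dvd_gcd (Nat.gcd_dvd_right _ _)
          ((Nat.gcd_dvd_left _ _).trans (Nat.gcd_dvd_left _ _))
      have h7 := Nat.le_of_dvd (Nat.gcd_pos_of_pos_left _ ha0) h6
      have h8 := Nat.le_of_dvd h₂ hab
      omega)
  refine ⟨u * t, v, ?_⟩
  rw [huv, ht]
  push_cast
  ring

/-! ### Representability by a family -/

/-- `z` is a non-negative integral combination of the weights `a i`, `i ∈ A`. -/
def IsRep {κ : Type*} (A : Finset κ) (a : κ → ℕ) (z : ℤ) : Prop :=
  ∃ x : κ → ℕ, ((∑ i ∈ A, x i * a i : ℕ) : ℤ) = z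

theorem IsRep.mono {κ : Type*} [DecidableEq κ] {A B : Finset κ} {a : κ → ℕ} {z : ℤ} (hAB : A ⊆ B)
    (h : IsRep A a z) : IsRep B a z := by
  obtain ⟨x, hx⟩ := h
  refine ⟨fun i => if i ∈ A then x i else 0, ?_⟩
  rw [← hx]
  congr 1
  rw [← Finset.sum_subset hAB]
  · exact Finset.sum_congr rfl fun i hi => by simp [hi]
  · intro i _ hi
    simp [hi]

theorem IsRep.of_dvd {κ : Type*} {A : Finset κ} {a b : κ → ℕ} {z : ℤ}
    (hab : ∀ i ∈ A, a i ∣ b i) (h : IsRep A b z) : IsRep A a z := by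
  obtain ⟨x, hx⟩ := h
  refine ⟨fun i => x i * (b i / a i), ?_⟩
  rw [← hx]
  congr 1
  refine Finset.sum_congr rfl fun i hi => ?_
  rw [mul_assoc, Nat.div_mul_cancel (hab i hi)]

theorem IsRep.two {κ : Type*} [DecidableEq κ] {A : Finset κ} {a : κ → ℕ} {z : ℤ} {i j : κ}
    (hi : i ∈ A) (hj : j ∈ A) (hij : i ≠ j) (h : ∃ u v : ℕ, z = u * a i + v * a j) :
    IsRep A a z := by
  obtain ⟨u, v, rfl⟩ := h
  have hsub : ({i, j} : Finset κ) ⊆ A := by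
    intro l hl
    simp only [Finset.mem_insert, Finset.mem_singleton] at hl
    rcases hl with rfl | rfl <;> assumption
  refine IsRep.mono hsub ⟨fun l => if l = i then u else v, ?_⟩
  rw [Finset.sum_pair hij]
  simp [hij.symm]

theorem IsRep.three {κ : Type*} [DecidableEq κ] {A : Finset κ} {a : κ → ℕ} {z : ℤ} {i j k : κ}
    (hi : i ∈ A) (hj : j ∈ A) (hk : k ∈ A) (hij : i ≠ j) (hik : i ≠ k) (hjk : j ≠ k)
    (h : ∃ u v w : ℕ, z = u * a i + v * a j + w * a k) : IsRep A a z := by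
  obtain ⟨u, v, w, rfl⟩ := h
  have hsub : ({i, j, k} : Finset κ) ⊆ A := by
    intro l hl
    simp only [Finset.mem_insert, Finset.mem_singleton] at hl
    rcases hl with rfl | rfl | rfl <;> assumption
  refine IsRep.mono hsub ⟨fun l => if l = i then u else if l = j then v else w, ?_⟩
  rw [Finset.sum_insert (by simp [hij, hik]), Finset.sum_pair hjk]
  simp [hij.symm, hik.symm, hjk.symm]
  ring

/-! ### One degree -/

/-- The one-degree theorem: if all weights divide `d` and their pairwise gcds divide `h`, then
`d - ∑ a i` bounds the `1/h`-Frobenius number.  A weight `a n` is proper in `d`, so it can be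
dropped at the cost of dividing `d` by a prime whose exponent in `a n` exceeds that in `h`. -/
theorem rep_one_degree {κ : Type*} [DecidableEq κ] {h : ℕ} {a : κ → ℕ} (m : ℕ) :
    ∀ (A : Finset κ) (d : ℕ), A.card = m + 2 → 0 < d → (∀ i ∈ A, a i ∣ d) →
      (∀ i ∈ A, ¬ a i ∣ h) → (∀ i ∈ A, ∀ j ∈ A, i ≠ j → Nat.gcd (a i) (a j) ∣ h) →
      ∀ z : ℤ, (h : ℤ) ∣ z → (d : ℤ) - ∑ i ∈ A, (a i : ℤ) < z → IsRep A a z := by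
  induction m with
  | zero =>
    intro A d hA hd hdvd _ hgood z hz hlt
    obtain ⟨i, j, hij, rfl⟩ := Finset.card_eq_two.1 hA
    rw [Finset.sum_pair hij] at hlt
    have hi : i ∈ ({i, j} : Finset κ) := by simp
    have hj : j ∈ ({i, j} : Finset κ) := by simp
    refine IsRep.two hi hj hij (repr_two (Nat.pos_of_dvd_of_pos (hdvd j hj) hd)
      ((Int.natCast_dvd_natCast.2 (hgood i hi j hj hij)).trans hz) ?_)
    have := Nat.le_of_dvd hd (Nat.lcm_dvd (hdvd i hi) (hdvd j hj))
    omega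
  | succ m ih =>
    intro A d hA hd hdvd hnd hgood z hz hlt
    obtain ⟨n, hn, i, hi, hni⟩ := Finset.one_lt_card.1 (show 1 < A.card by omega)
    have hne : a n ≠ d := by
      intro e
      refine hnd i hi ?_
      have := hgood i hi n hn hni.symm
      rwa [Nat.gcd_eq_left (e ▸ hdvd i hi)] at this
    obtain ⟨p, k, hp, hpk, hph⟩ := exists_primePow (hnd n hn)
    have hpd : p ∣ d := (dvd_pow_self p (pos_exp hph)).trans (hpk.trans (hdvd n hn))
    have hcost := div_prime_add_le hp hd (hdvd n hn) hne le_rfl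
    refine IsRep.mono (Finset.erase_subset n A) (ih (A.erase n) (d / p)
      (by rw [Finset.card_erase_of_mem hn]; omega) (div_prime_pos hp hd hpd) ?_ ?_ ?_ z hz ?_)
    · intro j hj
      rw [Finset.mem_erase] at hj
      exact dvd_div_prime hp (hdvd j hj.2) (hpk.trans (hdvd n hn)) fun hpj =>
        hph ((Nat.dvd_gcd hpj hpk).trans (hgood j hj.2 n hn hj.1))
    · exact fun j hj => hnd j (Finset.mem_of_mem_erase hj)
    · exact fun j hj l hl => hgood j (Finset.mem_of_mem_erase hj) l (Finset.mem_of_mem_erase hl)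
    · rw [← Finset.add_sum_erase A _ hn] at hlt
      have : ((d / p : ℕ) : ℤ) + a n ≤ d := by exact_mod_cast hcost
      linarith

/-! ### Regularity for two degrees -/

/-- `h`-regularity for two degrees `d₁, d₂` in the special case where every weight divides `d₁`
and no weight divides `h`. -/
structure Reg1 {κ : Type*} (h d₁ d₂ : ℕ) (A : Finset κ) (a : κ → ℕ) : Prop where
  dvd : ∀ i ∈ A, a i ∣ d₁
  nd : ∀ i ∈ A, ¬ a i ∣ h
  pair : ∀ i ∈ A, ∀ j ∈ A, i ≠ j → Nat.gcd (a i) (a j) ∣ h ∨ Nat.gcd (a i) (a j) ∣ d₂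
  triple : ∀ i ∈ A, ∀ j ∈ A, ∀ k ∈ A, i ≠ j → i ≠ k → j ≠ k →
    Nat.gcd (Nat.gcd (a i) (a j)) (a k) ∣ h

/-- `h`-regularity for two degrees `d₁, d₂`, with no weight dividing `h`. -/
structure Reg2 {κ : Type*} (h d₁ d₂ : ℕ) (A : Finset κ) (a : κ → ℕ) : Prop where
  dvd : ∀ i ∈ A, a i ∣ d₁ ∨ a i ∣ d₂
  nd : ∀ i ∈ A, ¬ a i ∣ h
  pair : ∀ i ∈ A, ∀ j ∈ A, i ≠ j → Nat.gcd (a i) (a j) ∣ h ∨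
    (Nat.gcd (a i) (a j) ∣ d₁ ∧ Nat.gcd (a i) (a j) ∣ d₂)
  triple : ∀ i ∈ A, ∀ j ∈ A, ∀ k ∈ A, i ≠ j → i ≠ k → j ≠ k →
    Nat.gcd (Nat.gcd (a i) (a j)) (a k) ∣ h

section

variable {κ : Type*} {h d₁ d₂ : ℕ} {A : Finset κ} {a : κ → ℕ}

theorem Reg1.toReg2 (H : Reg1 h d₁ d₂ A a) : Reg2 h d₁ d₂ A a where
  dvd i hi := Or.inl (H.dvd i hi)
  nd := H.nd
  pair i hi j hj hij := (H.pair i hi j hj hij).imp id fun e =>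
    ⟨(Nat.gcd_dvd_left _ _).trans (H.dvd i hi), e⟩
  triple := H.triple

theorem Reg2.symm (H : Reg2 h d₁ d₂ A a) : Reg2 h d₂ d₁ A a where
  dvd i hi := (H.dvd i hi).symm
  nd := H.nd
  pair i hi j hj hij := (H.pair i hi j hj hij).imp id And.symm
  triple := H.triple

theorem Reg2.toReg1 (H : Reg2 h d₁ d₂ A a) (hd : ∀ i ∈ A, a i ∣ d₁) : Reg1 h d₁ d₂ A a where
  dvd := hd
  nd := H.nd
  pair i hi j hj hij := (H.pair i hi j hj hij).imp id And.right
  triple := H.triple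

/-- A prime power not dividing `h` divides at most two weights. -/
theorem Reg2.not_dvd_third (H : Reg2 h d₁ d₂ A a) {r : ℕ} (hr : ¬ r ∣ h) {i j k : κ} (hi : i ∈ A)
    (hj : j ∈ A) (hk : k ∈ A) (hij : i ≠ j) (hik : i ≠ k) (hjk : j ≠ k) (hri : r ∣ a i)
    (hrj : r ∣ a j) : ¬ r ∣ a k := fun hrk =>
  hr ((Nat.dvd_gcd (Nat.dvd_gcd hri hrj) hrk).trans (H.triple i hi j hj k hk hij hik hjk))

variable [DecidableEq κ]

/-- The theorem when some weight equals the degree `d₁`: these cancel, and the other weights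
form a one-degree family with respect to `d₂`. -/
theorem Reg2.rep_of_eq (H : Reg2 h d₁ d₂ A a) (hA : 3 ≤ A.card) (h₂ : 0 < d₂)
    {n : κ} (hn : n ∈ A) (hnd : a n = d₁) {z : ℤ} (hz : (h : ℤ) ∣ z)
    (hlt : (d₁ : ℤ) + d₂ - ∑ i ∈ A, (a i : ℤ) < z) : IsRep A a z := by
  have hc := Finset.card_erase_of_mem hn
  refine IsRep.mono (Finset.erase_subset n A) (rep_one_degree (A.card - 3) (A.erase n) d₂
    (by omega) h₂ ?_ ?_ ?_ z hz ?_)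
  · intro i hi
    rw [Finset.mem_erase] at hi
    rcases H.dvd i hi.2 with h' | h'
    · have hg : Nat.gcd (a i) (a n) = a i := Nat.gcd_eq_left (hnd ▸ h')
      rcases H.pair i hi.2 n hn hi.1 with e | e <;> rw [hg] at e
      · exact absurd e (H.nd i hi.2)
      · exact e.2
    · exact h'
  · exact fun i hi => H.nd i (Finset.mem_of_mem_erase hi)
  · intro i hi j hj hij
    rw [Finset.mem_erase] at hi hj
    rcases H.pair i hi.2 j hj.2 hij with e | e
    · exact e
    · have := H.triple i hi.2 j hj.2 n hn hij hi.1 hj.1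
      rwa [Nat.gcd_eq_left (hnd ▸ e.1)] at this
  · rw [← Finset.add_sum_erase A _ hn, hnd] at hlt
    linarith

/-! ### All weights dividing one degree -/

theorem Reg1.rep_card_three (H : Reg1 h d₁ d₂ A a) (hA : A.card = 3) (h₁ : 0 < d₁) (h₂ : 0 < d₂)
    {z : ℤ} (hz : (h : ℤ) ∣ z) (hlt : (d₁ : ℤ) + d₂ - ∑ i ∈ A, (a i : ℤ) < z) :
    IsRep A a z := by
  by_cases hall : ∀ i ∈ A, ∀ j ∈ A, i ≠ j → Nat.gcd (a i) (a j) ∣ h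
  · exact rep_one_degree 1 A d₁ hA h₁ H.dvd H.nd hall z hz (by omega)
  -- Name the weights so that the pair `i, j` has a gcd not dividing `h`.
  push Not at hall
  obtain ⟨i, hi, j, hj, hij, hbad⟩ := hall
  obtain ⟨k, hk⟩ : ∃ k, k ∈ (A.erase i).erase j := by
    apply Finset.card_pos.1
    rw [Finset.card_erase_of_mem (Finset.mem_erase.2 ⟨hij.symm, hj⟩),
      Finset.card_erase_of_mem hi]
    omega
  rw [Finset.mem_erase, Finset.mem_erase] at hk
  obtain ⟨hkj, hki, hk⟩ := hk
  have hsum : ∑ l ∈ A, (a l : ℤ) = a i + a j + a k := by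
    have hsub : ({i, j, k} : Finset κ) ⊆ A := by
      intro l hl
      simp only [Finset.mem_insert, Finset.mem_singleton] at hl
      rcases hl with rfl | rfl | rfl <;> assumption
    rw [← Finset.eq_of_subset_of_card_le hsub (by
      rw [hA, Finset.card_eq_three.2 ⟨i, j, k, hij, hki.symm, hkj.symm, rfl⟩]),
      Finset.sum_insert (by simp [hij, hki.symm]), Finset.sum_pair hkj.symm]
    ring
  rw [hsum] at hlt
  have gij := (H.pair i hi j hj hij).resolve_left hbad
  have di := H.dvd i hi
  have dj := H.dvd j hj
  have dk := H.dvd k hk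
  rcases H.pair i hi k hk hki.symm with gik | gik <;>
    rcases H.pair j hj k hk hkj.symm with gjk | gjk
  · exact IsRep.two hi hk hki.symm
      (three_one_bad h₁ h₂ di dj dk gij gik gjk hz (by omega))
  · refine IsRep.two hi hk hki.symm (three_two_bad h₁ h₂ di dk dj gik gij ?_ hz (by omega))
    rwa [Nat.gcd_comm]
  · refine IsRep.two hj hk hkj.symm (three_two_bad h₁ h₂ dj dk di gjk ?_ ?_ hz (by omega))
    · rwa [Nat.gcd_comm]
    · rwa [Nat.gcd_comm]
  · exact IsRep.three hi hj hk hij hki.symm hkj.symm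
      (three_all_bad h₁ h₂ di dj dk gij gik gjk (H.triple i hi j hj k hk hij hki.symm hkj.symm)
        hz (by omega))

/-- The averaging step.  If every member of a family `W` of primes has the property that
`q ^ v_q(X)` does not divide `b`, then passing from `b` to `lcm b X` multiplies it by at
least `2 ^ #W ≥ #W + 1`. -/
theorem card_succ_mul_le_lcm {b X : ℕ} (hb : 0 < b) (hX : 0 < X) (W : Finset ℕ)
    (hW : ∀ q ∈ W, q.Prime ∧ ¬ q ^ X.factorization q ∣ b) :
    (W.card + 1) * b ≤ Nat.lcm b X := by
  obtain ⟨t, ht⟩ := Nat.dvd_lcm_left b X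
  have ht0 : 0 < t := Nat.pos_of_mul_pos_left (ht ▸ Nat.lcm_pos hb hX)
  have hdvd : ∏ q ∈ W, q ∣ t := by
    refine Finset.prod_primes_dvd t (fun q hq => (hW q hq).1.prime) fun q hq => ?_
    by_contra hqt
    have hq1 := (hW q hq).1
    have h1 : q ^ X.factorization q ∣ b * t :=
      ht ▸ (Nat.ordProj_dvd X q).trans (Nat.dvd_lcm_right _ _)
    exact (hW q hq).2 ((Nat.Coprime.pow_left _
      ((hq1.coprime_iff_not_dvd).2 hqt)).dvd_of_dvd_mul_right h1)
  have h2 : 2 ^ W.card ≤ ∏ q ∈ W, q :=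
    Finset.pow_card_le_prod _ _ _ fun q hq => (hW q hq).1.two_le
  have h3 : W.card + 1 ≤ t :=
    (Nat.lt_two_pow_self (n := W.card)).trans_le (h2.trans (Nat.le_of_dvd ht0 hdvd))
  rw [ht, mul_comm b t]
  exact Nat.mul_le_mul_right _ h3

/-- The theorem for a family in which nothing can be simplified any more: no prime `q` can be
spared in `d₁` at the cost of a single weight, no weight divides `d₂`, and no weight can be
enlarged by a prime power `q ^ v_q(X)`, `X = gcd h d₁`, without violating regularity.

For a prime `q ∣ X` with `q ^ v_q(X) ∤ d₂`, the weights divisible by `q ^ v_q(X)` have pairwise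
gcds dividing `h`, and so have their multiples `lcm (a i) X`.  The one-degree theorem then bounds
the Frobenius number by `d₁ - ∑ lcm (a i) X`, and averaging over `q` shows that one of these
bounds is good enough. -/
theorem Reg1.rep_irreducible (H : Reg1 h d₁ d₂ A a) (hA : A.Nonempty) (h₁ : 0 < d₁)
    (h₂ : 0 < d₂)
    (hspare : ∀ q : ℕ, q.Prime → q ∣ d₁ → ∀ n ∈ A, ∃ i ∈ A, i ≠ n ∧ ¬ a i ∣ d₁ / q)
    (hnd₂ : ∀ n ∈ A, ¬ a n ∣ d₂)
    (hraise : ∀ n ∈ A, ∀ q : ℕ,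
      (∀ j ∈ A, j ≠ n → ¬ Nat.gcd (a n) (a j) ∣ h →
        Nat.gcd (q ^ (Nat.gcd h d₁).factorization q) (a j) ∣ d₂) →
      q ^ (Nat.gcd h d₁).factorization q ∣ a n)
    {z : ℤ} (hz : (h : ℤ) ∣ z) (hlt : (d₁ : ℤ) + d₂ - ∑ i ∈ A, (a i : ℤ) < z) :
    IsRep A a z := by
  have hXh : Nat.gcd h d₁ ∣ h := Nat.gcd_dvd_left _ _
  have hXd : Nat.gcd h d₁ ∣ d₁ := Nat.gcd_dvd_right _ _
  have hX0 : 0 < Nat.gcd h d₁ := Nat.gcd_pos_of_pos_right _ h₁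
  have hXm : ∀ r, r ∣ h → r ∣ d₁ → r ∣ Nat.gcd h d₁ := fun r => Nat.dvd_gcd
  generalize Nat.gcd h d₁ = X at *
  set Q : ℕ → ℕ := fun q => q ^ X.factorization q with hQ
  have hQX : ∀ q, Q q ∣ X := fun q => Nat.ordProj_dvd X q
  have hpos : ∀ i ∈ A, 0 < a i := fun i hi => Nat.pos_of_dvd_of_pos (H.dvd i hi) h₁
  set R := X.primeFactors.filter fun q => ¬ Q q ∣ d₂ with hR
  have hRp : ∀ q ∈ R, q.Prime := fun q hq =>
    Nat.prime_of_mem_primeFactors (Finset.mem_filter.1 hq).1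
  have hRd : ∀ q ∈ R, ¬ Q q ∣ d₂ := fun q hq => (Finset.mem_filter.1 hq).2
  -- Every weight belongs to one of the families.
  have hcover : ∀ i ∈ A, ∃ q ∈ R, Q q ∣ a i := by
    intro i hi
    by_contra! hno
    refine hnd₂ i hi ?_
    rw [Nat.dvd_iff_prime_pow_dvd_dvd]
    intro q k hq hk
    rcases Nat.eq_zero_or_pos k with rfl | hk0
    · simp
    have hkd : q ^ k ∣ d₁ := hk.trans (H.dvd i hi)
    by_cases hkh : q ^ k ∣ h
    · by_contra hkd₂
      have hkX : q ^ k ∣ X := hXm _ hkh hkd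
      have hkQ : q ^ k ∣ Q q :=
        pow_dvd_pow _ ((hq.pow_dvd_iff_le_factorization hX0.ne').1 hkX)
      have hqR : q ∈ R := Finset.mem_filter.2
        ⟨Nat.mem_primeFactors.2 ⟨hq, (dvd_pow_self q hk0.ne').trans hkX, hX0.ne'⟩,
          fun e => hkd₂ (hkQ.trans e)⟩
      have := mt (hraise i hi q) (hno q hqR)
      push Not at this
      obtain ⟨j, hj, hji, hbad, hs⟩ := this
      obtain ⟨s, -, hs'⟩ := (Nat.dvd_prime_pow hq).1 (Nat.gcd_dvd_left (Q q) (a j))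
      have hsj : q ^ s ∣ a j := hs' ▸ Nat.gcd_dvd_right _ _
      change ¬ Nat.gcd (Q q) (a j) ∣ d₂ at hs
      rw [hs'] at hs
      have hg := (H.pair i hi j hj hji.symm).resolve_left hbad
      rcases le_total k s with hks | hks
      · exact hkd₂ ((Nat.dvd_gcd hk ((pow_dvd_pow q hks).trans hsj)).trans hg)
      · exact hs ((Nat.dvd_gcd ((pow_dvd_pow q hks).trans hk) hsj).trans hg)
    · obtain ⟨j, hj, hji, hjd⟩ := hspare q hq ((dvd_pow_self q hk0.ne').trans hkd) i hi
      have hkj : q ^ k ∣ a j := by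
        by_contra hkj
        exact hjd (dvd_div_prime hq (H.dvd j hj) hkd hkj)
      rcases H.pair i hi j hj hji.symm with e | e
      · exact absurd ((Nat.dvd_gcd hk hkj).trans e) hkh
      · exact (Nat.dvd_gcd hk hkj).trans e
  have hRne : R.Nonempty := by
    obtain ⟨i, hi⟩ := hA
    obtain ⟨q, hq, -⟩ := hcover i hi
    exact ⟨q, hq⟩
  have hmul : ∀ i ∈ A, R.card * a i ≤ ∑ q ∈ R.filter (fun q => Q q ∣ a i), Nat.lcm (a i) X := by
    intro i hi
    have hk : 1 ≤ (R.filter fun q => Q q ∣ a i).card := by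
      obtain ⟨q, hq, hqi⟩ := hcover i hi
      exact Finset.card_pos.2 ⟨q, Finset.mem_filter.2 ⟨hq, hqi⟩⟩
    have hw := card_succ_mul_le_lcm (hpos i hi) hX0 (R.filter fun q => ¬ Q q ∣ a i)
      fun q hq => ⟨hRp q (Finset.mem_filter.1 hq).1, (Finset.mem_filter.1 hq).2⟩
    have hsplit := Finset.card_filter_add_card_filter_not (s := R) (fun q => Q q ∣ a i)
    rw [Finset.sum_const, smul_eq_mul]
    generalize (R.filter fun q => Q q ∣ a i).card = k at *
    generalize (R.filter fun q => ¬ Q q ∣ a i).card = w at *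
    calc R.card * a i ≤ (k * (w + 1)) * a i := Nat.mul_le_mul_right _ (by nlinarith)
      _ = k * ((w + 1) * a i) := by ring
      _ ≤ _ := Nat.mul_le_mul_left _ hw
  obtain ⟨q, hq, hsum⟩ : ∃ q ∈ R,
      ∑ i ∈ A, a i ≤ ∑ i ∈ A.filter (fun i => Q q ∣ a i), Nat.lcm (a i) X := by
    by_contra! hno
    have h3 := Finset.sum_lt_sum_of_nonempty hRne hno
    have h4 : ∑ q ∈ R, ∑ i ∈ A.filter (fun i => Q q ∣ a i), Nat.lcm (a i) X
        = ∑ i ∈ A, ∑ q ∈ R.filter (fun q => Q q ∣ a i), Nat.lcm (a i) X := by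
      refine Finset.sum_comm' fun q i => ?_
      simp only [Finset.mem_filter]
      tauto
    have h5 := Finset.sum_le_sum hmul
    rw [← Finset.mul_sum] at h5
    rw [h4, Finset.sum_const, smul_eq_mul] at h3
    omega
  have hqp := hRp q hq
  have hqX : q ∣ X := Nat.dvd_of_mem_primeFactors (Finset.mem_filter.1 hq).1
  have hmem : ∀ i ∈ A, ¬ a i ∣ d₁ / q → i ∈ A.filter (fun i => Q q ∣ a i) := by
    intro i hi hid
    refine Finset.mem_filter.2 ⟨hi, ?_⟩
    by_contra hqi
    exact hid (dvd_div_prime hqp (H.dvd i hi) ((hQX q).trans hXd) hqi)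
  have hcard : 1 < (A.filter (fun i => Q q ∣ a i)).card := by
    obtain ⟨n, hn⟩ := hA
    obtain ⟨i, hi, -, hid⟩ := hspare q hqp (hqX.trans hXd) n hn
    obtain ⟨j, hj, hji, hjd⟩ := hspare q hqp (hqX.trans hXd) i hi
    exact Finset.one_lt_card.2 ⟨i, hmem i hi hid, j, hmem j hj hjd, hji.symm⟩
  refine IsRep.mono (Finset.filter_subset (fun i => Q q ∣ a i) A)
    (IsRep.of_dvd (b := fun i => Nat.lcm (a i) X) (fun i _ => Nat.dvd_lcm_left _ _)
      (rep_one_degree (h := h) ((A.filter (fun i => Q q ∣ a i)).card - 2) _ d₁ (by omega) h₁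
        ?_ ?_ ?_ z hz ?_))
  · exact fun i hi => Nat.lcm_dvd (H.dvd i (Finset.mem_filter.1 hi).1) hXd
  · exact fun i hi e => H.nd i (Finset.mem_filter.1 hi).1 ((Nat.dvd_lcm_left _ _).trans e)
  · intro i hi j hj hij
    rw [Finset.mem_filter] at hi hj
    have hgood : Nat.gcd (a i) (a j) ∣ h := by
      rcases H.pair i hi.1 j hj.1 hij with e | e
      · exact e
      · exact absurd ((Nat.dvd_gcd hi.2 hj.2).trans e) (hRd q hq)
    refine (gcd_lcm_dvd _ _ _).trans (Nat.lcm_dvd ?_ ((Nat.gcd_dvd_left _ _).trans hXh))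
    exact (gcd_lcm_dvd _ _ _).trans (Nat.lcm_dvd hgood
      ((Nat.gcd_dvd_left _ _).trans hXh))
  · have : (∑ i ∈ A, (a i : ℤ)) ≤ ∑ i ∈ A.filter (fun i => Q q ∣ a i), (Nat.lcm (a i) X : ℤ) := by
      exact_mod_cast hsum
    have h2' : (0 : ℤ) < d₂ := by exact_mod_cast h₂
    linarith

theorem gcd_lcm_left_dvd {b m y r : ℕ} (hb : Nat.gcd b y ∣ r) (hm : Nat.gcd m y ∣ r) :
    Nat.gcd (Nat.lcm b m) y ∣ r := by
  rw [Nat.gcd_comm]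
  exact (gcd_lcm_dvd _ _ _).trans (Nat.lcm_dvd hb hm)

/-- Enlarging one weight `a n` to `lcm (a n) m`, where `m` divides both `h` and `d₁`. -/
theorem Reg1.update (H : Reg1 h d₁ d₂ A a) {n : κ} (hn : n ∈ A) {m : ℕ} (hmh : m ∣ h)
    (hmd : m ∣ d₁)
    (hm : ∀ j ∈ A, j ≠ n → ¬ Nat.gcd (a n) (a j) ∣ h → Nat.gcd m (a j) ∣ d₂) :
    Reg1 h d₁ d₂ A (Function.update a n (Nat.lcm (a n) m)) := by
  have hpair : ∀ j ∈ A, j ≠ n → Nat.gcd (Nat.lcm (a n) m) (a j) ∣ h ∨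
      Nat.gcd (Nat.lcm (a n) m) (a j) ∣ d₂ := by
    intro j hj hjn
    by_cases hg : Nat.gcd (a n) (a j) ∣ h
    · exact Or.inl (gcd_lcm_left_dvd hg ((Nat.gcd_dvd_left _ _).trans hmh))
    · exact Or.inr (gcd_lcm_left_dvd ((H.pair n hn j hj hjn.symm).resolve_left hg)
        (hm j hj hjn hg))
  have htriple : ∀ j ∈ A, ∀ k ∈ A, n ≠ j → n ≠ k → j ≠ k →
      Nat.gcd (Nat.gcd (Nat.lcm (a n) m) (a j)) (a k) ∣ h := by
    intro j hj k hk hnj hnk hjk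
    rw [Nat.gcd_assoc]
    refine gcd_lcm_left_dvd ?_ ((Nat.gcd_dvd_left _ _).trans hmh)
    rw [← Nat.gcd_assoc]
    exact H.triple n hn j hj k hk hnj hnk hjk
  refine ⟨?_, ?_, ?_, ?_⟩
  · intro i hi
    rcases eq_or_ne i n with rfl | hin
    · rw [Function.update_self]
      exact Nat.lcm_dvd (H.dvd i hi) hmd
    · rw [Function.update_of_ne hin]
      exact H.dvd i hi
  · intro i hi
    rcases eq_or_ne i n with rfl | hin
    · rw [Function.update_self]
      exact fun e => H.nd i hi ((Nat.dvd_lcm_left _ _).trans e)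
    · rw [Function.update_of_ne hin]
      exact H.nd i hi
  · intro i hi j hj hij
    rcases eq_or_ne i n with rfl | hin
    · rw [Function.update_self, Function.update_of_ne hij.symm]
      exact hpair j hj hij.symm
    · rw [Function.update_of_ne hin]
      rcases eq_or_ne j n with rfl | hjn
      · rw [Function.update_self, Nat.gcd_comm]
        exact hpair i hi hin
      · rw [Function.update_of_ne hjn]
        exact H.pair i hi j hj hij
  · intro i hi j hj k hk hij hik hjk
    rcases eq_or_ne i n with rfl | hin
    · rw [Function.update_self, Function.update_of_ne hij.symm, Function.update_of_ne hik.symm]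
      exact htriple j hj k hk hij hik hjk
    · rw [Function.update_of_ne hin]
      rcases eq_or_ne j n with rfl | hjn
      · rw [Function.update_self, Function.update_of_ne hjk.symm, Nat.gcd_comm (a i)]
        exact htriple i hi k hk hij.symm hjk hik
      · rw [Function.update_of_ne hjn]
        rcases eq_or_ne k n with rfl | hkn
        · rw [Function.update_self, Nat.gcd_comm, ← Nat.gcd_assoc]
          exact htriple i hi j hj hik.symm hjk.symm hij
        · rw [Function.update_of_ne hkn]
          exact H.triple i hi j hj k hk hij hik hjk

/-- The theorem when all weights divide `d₁`.  The induction measure drops whenever a weight is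
dropped (without enlarging `d₁`) or replaced by a larger divisor of `d₁`. -/
theorem Reg1.rep (μ : ℕ) : ∀ (d₁ d₂ : ℕ) (A : Finset κ) (a : κ → ℕ),
    ∑ i ∈ A, (d₁ + 1 - a i) = μ → Reg1 h d₁ d₂ A a → 3 ≤ A.card → 0 < d₁ → 0 < d₂ →
    ∀ z : ℤ, (h : ℤ) ∣ z → (d₁ : ℤ) + d₂ - ∑ i ∈ A, (a i : ℤ) < z → IsRep A a z := by
  induction μ using Nat.strong_induction_on with
  | _ μ ih =>
  intro d₁ d₂ A a hμ H hA h₁ h₂ z hz hlt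
  rcases hA.eq_or_lt with hA3 | hA4
  · exact H.rep_card_three hA3.symm h₁ h₂ hz hlt
  by_cases heq : ∃ n ∈ A, a n = d₁
  · obtain ⟨n, hn, hnd⟩ := heq
    exact H.toReg2.rep_of_eq hA h₂ hn hnd hz hlt
  push Not at heq
  have hle : ∀ i ∈ A, a i ≤ d₁ := fun i hi => Nat.le_of_dvd h₁ (H.dvd i hi)
  -- The inductive hypothesis, applied after dropping the weight `a n`.
  have hdrop : ∀ n ∈ A, ∀ e₁ e₂ : ℕ, e₁ ≤ d₁ → 0 < e₁ → 0 < e₂ → e₁ + e₂ + a n ≤ d₁ + d₂ →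
      (∀ i ∈ A, i ≠ n → a i ∣ e₁) →
      (∀ i ∈ A, ∀ j ∈ A, i ≠ n → j ≠ n → i ≠ j → Nat.gcd (a i) (a j) ∣ d₂ →
        Nat.gcd (a i) (a j) ∣ h ∨ Nat.gcd (a i) (a j) ∣ e₂) → IsRep A a z := by
    intro n hn e₁ e₂ he he₁ he₂ hcost hdvd hpair
    have hs := Finset.add_sum_erase A (fun i => d₁ + 1 - a i) hn
    have hs' : ∑ i ∈ A.erase n, (e₁ + 1 - a i) ≤ ∑ i ∈ A.erase n, (d₁ + 1 - a i) :=
      Finset.sum_le_sum fun i _ => by omega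
    have hn1 := hle n hn
    refine IsRep.mono (Finset.erase_subset n A) (ih (∑ i ∈ A.erase n, (e₁ + 1 - a i))
      (by omega) e₁ e₂ (A.erase n) a rfl ⟨?_, ?_, ?_, ?_⟩
      (by rw [Finset.card_erase_of_mem hn]; omega) he₁ he₂ z hz ?_)
    · intro i hi
      rw [Finset.mem_erase] at hi
      exact hdvd i hi.2 hi.1
    · exact fun i hi => H.nd i (Finset.mem_of_mem_erase hi)
    · intro i hi j hj hij
      rw [Finset.mem_erase] at hi hj
      rcases H.pair i hi.2 j hj.2 hij with e | e
      · exact Or.inl e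
      · exact hpair i hi.2 j hj.2 hi.1 hj.1 hij e
    · exact fun i hi j hj k hk => H.triple i (Finset.mem_of_mem_erase hi) j
        (Finset.mem_of_mem_erase hj) k (Finset.mem_of_mem_erase hk)
    · rw [← Finset.add_sum_erase A _ hn] at hlt
      have : (e₁ : ℤ) + e₂ + a n ≤ d₁ + d₂ := by exact_mod_cast hcost
      linarith
  by_cases hdiv : ∃ n ∈ A, a n ∣ d₂
  · obtain ⟨n, hn, hnd₂⟩ := hdiv
    rcases eq_or_ne (a n) d₂ with hne | hne
    · -- The weight `a n` cancels `d₂`; the others have good gcds because triples do.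
      have hc := Finset.card_erase_of_mem hn
      refine IsRep.mono (Finset.erase_subset n A) (rep_one_degree (A.card - 3) (A.erase n) d₁
        (by omega) h₁ (fun i hi => H.dvd i (Finset.mem_of_mem_erase hi))
        (fun i hi => H.nd i (Finset.mem_of_mem_erase hi)) ?_ z hz ?_)
      · intro i hi j hj hij
        rw [Finset.mem_erase] at hi hj
        rcases H.pair i hi.2 j hj.2 hij with e | e
        · exact e
        · have := H.triple i hi.2 j hj.2 n hn hij hi.1 hj.1
          rwa [Nat.gcd_eq_left (hne ▸ e)] at this
      · rw [← Finset.add_sum_erase A _ hn, hne] at hlt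
        linarith
    · obtain ⟨p, k, hp, hpk, hph⟩ := exists_primePow (H.nd n hn)
      have hpd : p ^ k ∣ d₂ := hpk.trans hnd₂
      have hcost := div_prime_add_le hp h₂ hnd₂ hne le_rfl
      refine hdrop n hn d₁ (d₂ / p) le_rfl h₁
        (div_prime_pos hp h₂ ((dvd_pow_self p (pos_exp hph)).trans hpd)) (by omega)
        (fun i hi _ => H.dvd i hi) fun i hi j hj hin hjn hij hg => Or.inr ?_
      refine dvd_div_prime hp hg hpd fun hpg => ?_
      exact H.toReg2.not_dvd_third hph hi hj hn hij hin hjn (hpg.trans (Nat.gcd_dvd_left _ _))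
        (hpg.trans (Nat.gcd_dvd_right _ _)) hpk
  push Not at hdiv
  by_cases hspare : ∀ q : ℕ, q.Prime → q ∣ d₁ → ∀ n ∈ A, ∃ i ∈ A, i ≠ n ∧ ¬ a i ∣ d₁ / q
  swap
  · push Not at hspare
    obtain ⟨q, hq, hqd, n, hn, hall⟩ := hspare
    have hcost := div_prime_add_le hq h₁ (H.dvd n hn) (heq n hn) le_rfl
    exact hdrop n hn (d₁ / q) d₂ (Nat.div_le_self _ _) (div_prime_pos hq h₁ hqd) h₂ (by omega)
      hall fun _ _ _ _ _ _ _ e => Or.inr e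
  by_cases hraise : ∀ n ∈ A, ∀ q : ℕ,
      (∀ j ∈ A, j ≠ n → ¬ Nat.gcd (a n) (a j) ∣ h →
        Nat.gcd (q ^ (Nat.gcd h d₁).factorization q) (a j) ∣ d₂) →
      q ^ (Nat.gcd h d₁).factorization q ∣ a n
  · exact H.rep_irreducible (Finset.card_pos.1 (by omega)) h₁ h₂ hspare hdiv hraise hz hlt
  push Not at hraise
  obtain ⟨n, hn, q, hm, hmn⟩ := hraise
  have hmX := Nat.ordProj_dvd (Nat.gcd h d₁) q
  generalize q ^ (Nat.gcd h d₁).factorization q = m at *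
  have H' := H.update hn (hmX.trans (Nat.gcd_dvd_left _ _)) (hmX.trans (Nat.gcd_dvd_right _ _)) hm
  have hgt : ∀ i, a i ∣ Function.update a n (Nat.lcm (a n) m) i := by
    intro i
    rcases eq_or_ne i n with rfl | hin
    · rw [Function.update_self]
      exact Nat.dvd_lcm_left _ _
    · rw [Function.update_of_ne hin]
  have hle' : ∀ i ∈ A, Function.update a n (Nat.lcm (a n) m) i ≤ d₁ :=
    fun i hi => Nat.le_of_dvd h₁ (H'.dvd i hi)
  have hge : ∀ i ∈ A, a i ≤ Function.update a n (Nat.lcm (a n) m) i :=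
    fun i hi => Nat.le_of_dvd (Nat.pos_of_dvd_of_pos (H'.dvd i hi) h₁) (hgt i)
  have hlt_n : a n < Function.update a n (Nat.lcm (a n) m) n := by
    refine lt_of_le_of_ne (hge n hn) fun e => hmn ?_
    rw [Function.update_self] at e
    rw [e]
    exact Nat.dvd_lcm_right _ _
  refine IsRep.of_dvd (fun i _ => hgt i) (ih _ ?_ d₁ d₂ A _ rfl H' hA h₁ h₂ z hz ?_)
  · rw [← hμ]
    refine Finset.sum_lt_sum (fun i hi => ?_) ⟨n, hn, ?_⟩
    · have := hge i hi
      omega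
    · have := hle' n hn
      omega
  · have : ∑ i ∈ A, (a i : ℤ) ≤ ∑ i ∈ A, (Function.update a n (Nat.lcm (a n) m) i : ℤ) :=
      Finset.sum_le_sum fun i hi => by exact_mod_cast hge i hi
    linarith

/-! ### Two degrees -/

theorem Reg2.rep_card_three (H : Reg2 h d₁ d₂ A a) (h₁ : 0 < d₁) (h₂ : 0 < d₂) {i j k : κ}
    (hi : i ∈ A) (hj : j ∈ A) (hk : k ∈ A) (hij : i ≠ j) (hik : i ≠ k) (hjk : j ≠ k)
    (di : a i ∣ d₁) (dj : a j ∣ d₁) (dk : a k ∣ d₂) {z : ℤ} (hz : (h : ℤ) ∣ z)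
    (hlt : (d₁ : ℤ) + d₂ - (a i + a j + a k) < z) : IsRep A a z := by
  have hl := Nat.le_of_dvd h₁ (Nat.lcm_dvd di dj)
  have hj0 := Nat.pos_of_dvd_of_pos dj h₁
  rcases H.pair i hi j hj hij with e | e
  · have := Nat.le_of_dvd h₂ dk
    exact IsRep.two hi hj hij (repr_two hj0 ((Int.natCast_dvd_natCast.2 e).trans hz) (by omega))
  · have := Nat.le_of_dvd h₂ (Nat.lcm_dvd e.2 dk)
    exact IsRep.three hi hj hk hij hik hjk (repr_three hj0
      ((Int.natCast_dvd_natCast.2 (H.triple i hi j hj k hk hij hik hjk)).trans hz) (by omega))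

/-- Replacing `d₂` by `d₂ / p` after dropping the weight `a n`, where `p ^ k ∣ a n, d₂` does not
divide `h`, and any remaining weight divisible by `p ^ k` divides `d₁`. -/
theorem Reg2.erase (H : Reg2 h d₁ d₂ A a) {n : κ} (hn : n ∈ A) {p k : ℕ} (hp : p.Prime)
    (hpk : p ^ k ∣ a n) (hph : ¬ p ^ k ∣ h) (hpd : p ^ k ∣ d₂)
    (hrest : ∀ i ∈ A, i ≠ n → p ^ k ∣ a i → a i ∣ d₁) :
    Reg2 h d₁ (d₂ / p) (A.erase n) a := by
  refine ⟨?_, ?_, ?_, ?_⟩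
  · intro i hi
    rw [Finset.mem_erase] at hi
    by_cases hpi : p ^ k ∣ a i
    · exact Or.inl (hrest i hi.2 hi.1 hpi)
    · exact (H.dvd i hi.2).imp id fun e => dvd_div_prime hp e hpd hpi
  · exact fun i hi => H.nd i (Finset.mem_of_mem_erase hi)
  · intro i hi j hj hij
    rw [Finset.mem_erase] at hi hj
    refine (H.pair i hi.2 j hj.2 hij).imp id fun e => ⟨e.1, dvd_div_prime hp e.2 hpd fun hpg => ?_⟩
    exact H.not_dvd_third hph hi.2 hj.2 hn hij hi.1 hj.1 (hpg.trans (Nat.gcd_dvd_left _ _))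
        (hpg.trans (Nat.gcd_dvd_right _ _)) hpk
  · exact fun i hi j hj k hk => H.triple i (Finset.mem_of_mem_erase hi) j
        (Finset.mem_of_mem_erase hj) k (Finset.mem_of_mem_erase hk)

/-- The theorem for a finite family of weights.  With at least four weights and `d₁ ≤ d₂`, a
weight `a n` properly dividing `d₁` is at most half of either degree, so it can be dropped as soon
as one of the degrees can be divided by a prime `p`.  Taking `p` to have larger exponent in `a n`
than in `h`, at most one other weight obstructs this, and it divides one of the two degrees. -/
theorem Reg2.rep (m : ℕ) : ∀ (d₁ d₂ : ℕ) (A : Finset κ), A.card = m + 3 → Reg2 h d₁ d₂ A a →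
    0 < d₁ → 0 < d₂ →
    ∀ z : ℤ, (h : ℤ) ∣ z → (d₁ : ℤ) + d₂ - ∑ i ∈ A, (a i : ℤ) < z → IsRep A a z := by
  induction m with
  | zero =>
    intro d₁ d₂ A hA H h₁ h₂ z hz hlt
    by_cases hall₁ : ∀ i ∈ A, a i ∣ d₁
    · exact Reg1.rep _ d₁ d₂ A a rfl (H.toReg1 hall₁) (by omega) h₁ h₂ z hz hlt
    by_cases hall₂ : ∀ i ∈ A, a i ∣ d₂
    · exact Reg1.rep _ d₂ d₁ A a rfl (H.symm.toReg1 hall₂) (by omega) h₂ h₁ z hz (by linarith)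
    obtain ⟨i, j, k, hij, hik, hjk, rfl⟩ := Finset.card_eq_three.1 hA
    rw [Finset.sum_insert (by simp [hij, hik]), Finset.sum_pair hjk] at hlt
    have hi : i ∈ ({i, j, k} : Finset κ) := by simp
    have hj : j ∈ ({i, j, k} : Finset κ) := by simp
    have hk : k ∈ ({i, j, k} : Finset κ) := by simp
    rcases H.dvd i hi with ei | ei <;> rcases H.dvd j hj with ej | ej <;>
      rcases H.dvd k hk with ek | ek
    · exact absurd (by simp [ei, ej, ek]) hall₁
    · exact H.rep_card_three h₁ h₂ hi hj hk hij hik hjk ei ej ek hz (by linarith)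
    · exact H.rep_card_three h₁ h₂ hi hk hj hik hij hjk.symm ei ek ej hz (by linarith)
    · exact H.symm.rep_card_three h₂ h₁ hj hk hi hjk hij.symm hik.symm ej ek ei hz (by linarith)
    · exact H.rep_card_three h₁ h₂ hj hk hi hjk hij.symm hik.symm ej ek ei hz (by linarith)
    · exact H.symm.rep_card_three h₂ h₁ hi hk hj hik hij hjk.symm ei ek ej hz (by linarith)
    · exact H.symm.rep_card_three h₂ h₁ hi hj hk hij hik hjk ei ej ek hz (by linarith)
    · exact absurd (by simp [ei, ej, ek]) hall₂
  | succ m ih =>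
    intro d₁ d₂ A hA H h₁ h₂ z hz hlt
    wlog hle : d₁ ≤ d₂ generalizing d₁ d₂
    · exact this d₂ d₁ H.symm h₂ h₁ (by linarith) (by omega)
    by_cases hall₂ : ∀ i ∈ A, a i ∣ d₂
    · exact Reg1.rep _ d₂ d₁ A a rfl (H.symm.toReg1 hall₂) (by omega) h₂ h₁ z hz (by linarith)
    push Not at hall₂
    obtain ⟨n, hn, hn₂⟩ := hall₂
    have hn₁ := (H.dvd n hn).resolve_right hn₂
    rcases eq_or_ne (a n) d₁ with hne | hne
    · exact H.rep_of_eq (by omega) h₂ hn hne hz hlt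
    obtain ⟨p, k, hp, hpk, hph⟩ := exists_primePow (H.nd n hn)
    have hp_self : p ∣ p ^ k := dvd_pow_self p (pos_exp hph)
    have hpd₁ : p ^ k ∣ d₁ := hpk.trans hn₁
    have hc₁ := div_prime_add_le hp h₁ hn₁ hne le_rfl
    have hc₂ := div_prime_add_le hp h₁ hn₁ hne hle
    have hcard : (A.erase n).card = m + 3 := by
      rw [Finset.card_erase_of_mem hn]
      omega
    rw [← Finset.add_sum_erase A _ hn] at hlt
    by_cases hrest : ∀ i ∈ A, i ≠ n → p ^ k ∣ a i → a i ∣ d₂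
    · refine IsRep.mono (Finset.erase_subset n A) (ih (d₁ / p) d₂ _ hcard
        (H.symm.erase hn hp hpk hph hpd₁ hrest).symm
        (div_prime_pos hp h₁ (hp_self.trans hpd₁)) h₂ z hz ?_)
      have : ((d₁ / p : ℕ) : ℤ) + a n ≤ d₁ := by exact_mod_cast hc₁
      linarith
    · push Not at hrest
      obtain ⟨i, hi, hin, hpi, hi₂⟩ := hrest
      have hi₁ := (H.dvd i hi).resolve_right hi₂
      have hg := Nat.dvd_gcd hpi hpk
      have hpd₂ : p ^ k ∣ d₂ := by
        rcases H.pair i hi n hn hin with e | e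
        · exact absurd (hg.trans e) hph
        · exact hg.trans e.2
      refine IsRep.mono (Finset.erase_subset n A) (ih d₁ (d₂ / p) _ hcard
        (H.erase hn hp hpk hph hpd₂ ?_) h₁ (div_prime_pos hp h₂ (hp_self.trans hpd₂)) z hz ?_)
      · intro l hl hln hpl
        rcases eq_or_ne l i with rfl | hli
        · exact hi₁
        · exact absurd hpl (H.not_dvd_third hph hi hn hl hin hli.symm hln.symm hpi hpk)
      · have : ((d₂ / p : ℕ) : ℤ) + a n ≤ d₂ := by exact_mod_cast hc₂
        linarith

end

theorem reg2_of_isHRegularPair {h n : ℕ} {d : Fin 2 → ℕ} {a : Fin (n + 1) → ℕ}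
    (ha : ∀ i, 0 < a i) (hreg : IsHRegularPair h d a) (hnd : ∀ i, ¬ a i ∣ h) :
    Reg2 h (d 0) (d 1) Finset.univ a := by
  refine ⟨?_, fun i _ => hnd i, ?_, ?_⟩
  · intro i _
    have h1 : 1 < a i := by
      have := ha i
      have h2 : a i ≠ 1 := fun e => hnd i (e ▸ one_dvd h)
      omega
    rcases hreg {i} (Finset.subset_univ _) (by simp) (by simpa using h1) with ⟨P, -, hc, hP⟩ | e
    · obtain ⟨p, rfl⟩ := Finset.card_eq_one.1 (hc.trans (Finset.card_singleton i))
      have := hP p (by simp)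
      rw [Finset.gcd_singleton, normalize_eq] at this
      fin_cases p
      · exact Or.inl this
      · exact Or.inr this
    · rw [Finset.gcd_singleton, normalize_eq] at e
      exact absurd e (hnd i)
  · intro i _ j _ hij
    by_cases h1 : Nat.gcd (a i) (a j) ∣ h
    · exact Or.inl h1
    have hg : ({i, j} : Finset (Fin (n + 1))).gcd a = Nat.gcd (a i) (a j) := by
      rw [Finset.gcd_insert, Finset.gcd_singleton, normalize_eq]
      rfl
    have h2 : 1 < Nat.gcd (a i) (a j) := by
      have h3 := Nat.gcd_pos_of_pos_left (a j) (ha i)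
      have h4 : Nat.gcd (a i) (a j) ≠ 1 := fun e => h1 (e ▸ one_dvd h)
      omega
    rcases hreg {i, j} (Finset.subset_univ _) (by simp) (by rwa [hg]) with ⟨P, -, hc, hP⟩ | e
    · rw [Finset.card_pair hij] at hc
      have hPu : P = Finset.univ := Finset.eq_univ_of_card P (by simpa using hc)
      rw [hg, hPu] at hP
      exact Or.inr ⟨hP 0 (Finset.mem_univ _), hP 1 (Finset.mem_univ _)⟩
    · exact absurd (hg ▸ e) h1
  · intro i _ j _ k _ hij hik hjk
    by_contra h1
    have hg : ({i, j, k} : Finset (Fin (n + 1))).gcd a =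
        Nat.gcd (Nat.gcd (a i) (a j)) (a k) := by
      rw [Finset.gcd_insert, Finset.gcd_insert, Finset.gcd_singleton, normalize_eq, Nat.gcd_assoc]
      rfl
    have h2 : 1 < Nat.gcd (Nat.gcd (a i) (a j)) (a k) := by
      have h3 := Nat.gcd_pos_of_pos_left (a k) (Nat.gcd_pos_of_pos_left (a j) (ha i))
      have h4 : Nat.gcd (Nat.gcd (a i) (a j)) (a k) ≠ 1 := fun e => h1 (e ▸ one_dvd h)
      omega
    rcases hreg {i, j, k} (Finset.subset_univ _) (by simp) (by rwa [hg]) with ⟨P, -, hc, -⟩ | e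
    · have hP := Finset.card_le_univ P
      rw [hc, Finset.card_eq_three.2 ⟨i, j, k, hij, hik, hjk, rfl⟩, Fintype.card_fin] at hP
      omega
    · exact h1 (hg ▸ e)

/-- **Theorem (codimension 2).**
If `(d;a) = (d₁,d₂; a₀,…,aₙ)` is an `h`-regular pair with exactly two degrees, `n ≥ 2`,
and `aᵢ ∤ h` for all `i`, then `δ(d;a) ≥ F^h(a₀,…,aₙ)`. -/
theorem codim_two_frobenius_bound (h n : ℕ) (hh : 0 < h) (hn : 2 ≤ n)
    (d : Fin 2 → ℕ) (a : Fin (n + 1) → ℕ)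
    (hd : ∀ j, 0 < d j) (ha : ∀ i, 0 < a i)
    (hreg : IsHRegularPair h d a) (hnd : ∀ i, ¬ a i ∣ h) :
    deltaPair d a ≥ frobNum h a := by
  have H := reg2_of_isHRegularPair ha hreg hnd
  refine csSup_le ?_ ?_
  · -- Negative multiples are never representable, so the supremum is not over the empty set.
    have hg : 0 < (Finset.univ : Finset (Fin (n + 1))).gcd a := by
      refine Nat.pos_of_ne_zero fun e => ?_
      exact (ha 0).ne' (Finset.gcd_eq_zero_iff.1 e 0 (Finset.mem_univ _))
    refine ⟨-((Nat.lcm ((Finset.univ : Finset (Fin (n + 1))).gcd a) h : ℕ) : ℤ),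
      (dvd_neg).2 dvd_rfl, ?_⟩
    rintro ⟨x, hx⟩
    have := Nat.lcm_pos hg hh
    omega
  · rintro z ⟨hz, hrep⟩
    by_contra! hlt
    refine hrep (H.rep (n - 2) (d 0) (d 1) Finset.univ ?_ (hd 0) (hd 1) z
      ((Int.natCast_dvd_natCast.2 (Nat.dvd_lcm_right _ _)).trans hz) ?_)
    · rw [Finset.card_univ, Fintype.card_fin]
      omega
    · simpa [deltaPair, deltaOn, Fin.sum_univ_two] using hlt
end
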